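/- arXiv:2601.04009 — 2 statements merged into one kernel-verified Lean document; each statement's English description precedes it below -/
import Mathlib

section
/- For α ∈ [0,1) let Q_α ⊂ ℝ² be the interior of the convex hull of the four points (1,α), (α,1), (−1,−α), (−α,−1). Then ∫_{Q_α} A(x,y) d(x,y) tends to 3π²/8 as α tends to 1 from the left. -/
open MeasureTheory Real

/-- The area of the dual unit ball of the Hilbert metric of the square `(-1,1)²`
at the point `(x,y)`. -/
noncomputable def dualBallArea (q : ℝ × ℝ) : ℝ :=
  (2 + max |q.1| |q.2|) / (2 * (1 - q.1 ^ 2) * (1 - q.2 ^ 2))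

/-- The open quadrilateral with vertices `(1,α)`, `(α,1)`, `(-1,-α)`, `(-α,-1)`. -/
def hypQuad (α : ℝ) : Set (ℝ × ℝ) :=
  interior (convexHull ℝ
    ({((1 : ℝ), α), (α, (1 : ℝ)), ((-1 : ℝ), -α), (-α, (-1 : ℝ))} : Set (ℝ × ℝ)))

/-!
Both the integrand and the quadrilateral are symmetric under `q ↦ -q`, so the integral is twice
the integral over the half at the vertex `(1, 1)`. With `ε = 1 - α`, write `1 - x` and `1 - y` as
`ε (s ± d) / 2`: the integral over that half becomes the integral of `(s² - d²)⁻¹` times a bounded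
weight, over a region that exhausts the half-strip `|d| < 1 < s` as `ε → 0`, while the weight tends
to its value `3 / 4` at the vertex. Expanding `(s² - d²)⁻¹` as a geometric series in `d² / s²`
and integrating termwise gives `∑ 2 / (2k + 1)² = π² / 4` over the half-strip, whence the limit
`2 · (3 / 4) · π² / 4`.
-/

open Filter Module Set Topology
open scoped Pointwise

section DominatedConvergence

variable {ι X F : Type*} [MeasurableSpace X] [NormedAddCommGroup F] [NormedSpace ℝ F]

theorem tendsto_setIntegral_filter_of_dominated_convergence {μ : Measure X} {l : Filter ι}
    [l.IsCountablyGenerated] {s : ι → Set X} {t : Set X} {f : ι → X → F} {g : X → F}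
    {bound : X → ℝ} (hs : ∀ i, MeasurableSet (s i)) (ht : MeasurableSet t)
    (hst : ∀ i, s i ⊆ t) (hts : ∀ x ∈ t, ∀ᶠ i in l, x ∈ s i)
    (hf : ∀ᶠ i in l, AEStronglyMeasurable (f i) (μ.restrict (s i)))
    (hbound : ∀ᶠ i in l, ∀ x ∈ s i, ‖f i x‖ ≤ bound x) (hint : IntegrableOn bound t μ)
    (hlim : ∀ x ∈ t, Tendsto (f · x) l (𝓝 (g x))) :
    Tendsto (fun i => ∫ x in s i, f i x ∂μ) l (𝓝 (∫ x in t, g x ∂μ)) := by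
  have hindicator (i : ι) :
      ∫ x in t, (s i).indicator (f i) x ∂μ = ∫ x in s i, f i x ∂μ := by
    rw [setIntegral_indicator (hs i), inter_eq_right.2 (hst i)]
  simp only [← hindicator]
  refine tendsto_integral_filter_of_dominated_convergence (fun x => ‖bound x‖) ?_ ?_ hint.norm ?_
  · filter_upwards [hf] with i hfi
    rw [aestronglyMeasurable_indicator_iff (hs i), Measure.restrict_restrict (hs i),
      inter_eq_left.2 (hst i)]
    exact hfi
  · filter_upwards [hbound] with i hi
    refine ae_of_all _ fun x => ?_
    rw [norm_indicator_eq_indicator_norm]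
    exact indicator_le' (fun x hx => (hi x hx).trans (le_norm_self _)) (fun _ _ => norm_nonneg _) x
  · filter_upwards [ae_restrict_mem ht] with x hx
    refine (hlim x hx).congr' ?_
    filter_upwards [hts x hx] with i hi
    rw [indicator_of_mem hi]

end DominatedConvergence

section EvenIntegral

variable {E F : Type*} [NormedAddCommGroup F]

theorem integrableOn_neg_iff_of_even [AddGroup E] [MeasurableSpace E] [MeasurableNeg E]
    {μ : Measure E} [μ.IsNegInvariant] {f : E → F} (hf : Function.Even f) {s : Set E} :
    IntegrableOn f (-s) μ ↔ IntegrableOn f s μ := by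
  have hcomp : f ∘ Neg.neg = f := funext hf
  rw [← (Measure.measurePreserving_neg μ).integrableOn_comp_preimage
    (MeasurableEquiv.neg E).measurableEmbedding, hcomp, Set.neg_preimage, neg_neg]

variable [NormedSpace ℝ F]

theorem setIntegral_neg_of_even [AddGroup E] [MeasurableSpace E] [MeasurableNeg E]
    {μ : Measure E} [μ.IsNegInvariant] {f : E → F} (hf : Function.Even f) (s : Set E) :
    ∫ x in -s, f x ∂μ = ∫ x in s, f x ∂μ := by
  have h := (Measure.measurePreserving_neg μ).setIntegral_preimage_emb
    (MeasurableEquiv.neg E).measurableEmbedding f s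
  simpa only [hf _, Set.neg_preimage] using h

theorem setIntegral_eq_two_smul_inter_pos_of_even [NormedAddCommGroup E] [NormedSpace ℝ E]
    [MeasurableSpace E] [BorelSpace E] [FiniteDimensional ℝ E] {μ : Measure E}
    [μ.IsAddHaarMeasure] {f : E → F} (hf : Function.Even f) {s : Set E} (hs : -s = s)
    {φ : E →ₗ[ℝ] ℝ} (hφ : φ ≠ 0) :
    ∫ x in s, f x ∂μ = 2 • ∫ x in s ∩ {x | 0 < φ x}, f x ∂μ := by
  have hpos : MeasurableSet {x | 0 < φ x} :=
    (isOpen_lt continuous_const φ.continuous_of_finiteDimensional).measurableSet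
  have hker : μ {x | φ x = 0} = 0 :=
    Measure.addHaar_submodule μ (LinearMap.ker φ) (by rwa [Ne, LinearMap.ker_eq_top])
  have hdiff : (s \ {x | 0 < φ x} : Set E) =ᵐ[μ] (-(s ∩ {x | 0 < φ x}) : Set E) := by
    filter_upwards [measure_eq_zero_iff_ae_notMem.1 hker] with x hx
    have hxs : -x ∈ s ↔ x ∈ s := by rw [← Set.mem_neg, hs]
    have hxφ : ¬ 0 < φ x ↔ 0 < φ (-x) := by
      rw [map_neg, neg_pos, not_lt]
      exact ⟨fun h => lt_of_le_of_ne h hx, le_of_lt⟩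
    exact propext (and_congr hxs.symm hxφ)
  by_cases hint : IntegrableOn f s μ
  · rw [← integral_inter_add_sdiff hpos hint, setIntegral_congr_set hdiff,
      setIntegral_neg_of_even hf, two_smul]
  · have hint' : ¬ IntegrableOn f (s ∩ {x | 0 < φ x}) μ := fun h => hint <| by
      rw [← inter_union_sdiff s {x | 0 < φ x}, integrableOn_union, integrableOn_congr_set_ae hdiff,
        integrableOn_neg_iff_of_even hf]
      exact ⟨h, h⟩
    rw [integral_undef hint, integral_undef hint', smul_zero]

end EvenIntegral

theorem hasSum_one_div_odd_sq : HasSum (fun k : ℕ => 1 / (2 * k + 1 : ℝ) ^ 2) (π ^ 2 / 8) := by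
  have heven : HasSum (fun k : ℕ => 1 / ((2 * k : ℕ) : ℝ) ^ 2) (1 / 4 * (π ^ 2 / 6)) :=
    (hasSum_zeta_two.mul_left (1 / 4)).congr_fun fun k => by
      push_cast
      rw [mul_pow, div_mul_div_comm]
      norm_num
  have hodd : Summable (fun k : ℕ => 1 / ((2 * k + 1 : ℕ) : ℝ) ^ 2) :=
    hasSum_zeta_two.summable.comp_injective (i := fun k : ℕ => 2 * k + 1)
      ((add_left_injective 1).comp (mul_right_injective₀ two_ne_zero))
  have hadd :=
    (HasSum.even_add_odd (f := fun n : ℕ => 1 / (n : ℝ) ^ 2) heven hodd.hasSum).unique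
      hasSum_zeta_two
  have hval : ∑' k : ℕ, 1 / ((2 * k + 1 : ℕ) : ℝ) ^ 2 = π ^ 2 / 8 := by linarith
  rw [← hval]
  simpa only [Nat.cast_add, Nat.cast_mul, Nat.cast_ofNat, Nat.cast_one] using hodd.hasSum

section StripIntegral

variable {a : ℝ}

theorem eqOn_Ioi_rpow_neg_natCast (ha : 0 ≤ a) (n : ℕ) :
    EqOn (fun s : ℝ => s ^ (-(n : ℝ))) (fun s => (s ^ n)⁻¹) (Ioi a) := fun s hs => by
  simp only [rpow_neg (ha.trans hs.le), rpow_natCast]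

theorem integrableOn_Ioi_inv_pow (ha : 0 < a) {n : ℕ} (hn : 1 < n) :
    IntegrableOn (fun s : ℝ => (s ^ n)⁻¹) (Ioi a) :=
  (integrableOn_Ioi_rpow_of_lt (neg_lt_neg (Nat.one_lt_cast.2 hn)) ha).congr_fun
    (eqOn_Ioi_rpow_neg_natCast ha.le n) measurableSet_Ioi

theorem integral_Ioi_inv_pow_add_two (ha : 0 < a) (n : ℕ) :
    ∫ s in Ioi a, (s ^ (n + 2))⁻¹ = ((n + 1) * a ^ (n + 1))⁻¹ := by
  have hn : -((n + 2 : ℕ) : ℝ) < -1 := neg_lt_neg (Nat.one_lt_cast.2 (by omega))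
  have hexp : -((n + 2 : ℕ) : ℝ) + 1 = -((n + 1 : ℕ) : ℝ) := by push_cast; ring
  rw [← setIntegral_congr_fun measurableSet_Ioi (eqOn_Ioi_rpow_neg_natCast ha.le (n + 2)),
    integral_Ioi_rpow_of_lt hn ha, hexp, rpow_neg ha.le, rpow_natCast, neg_div_neg_eq,
    div_eq_mul_inv, ← mul_inv_rev]
  push_cast
  rfl

theorem integral_Ioo_neg_self_even_pow (ha : 0 ≤ a) (k : ℕ) :
    ∫ d in Ioo (-a) a, d ^ (2 * k) = 2 * a ^ (2 * k + 1) / (2 * k + 1) := by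
  rw [← integral_Ioc_eq_integral_Ioo, ← intervalIntegral.integral_of_le (by linarith),
    integral_pow, (odd_two_mul_add_one k).neg_pow]
  push_cast
  ring

theorem hasSum_inv_sq_sub_sq {s d : ℝ} (h : |d| < s) :
    HasSum (fun k : ℕ => (s ^ (2 * k + 2))⁻¹ * d ^ (2 * k)) (s ^ 2 - d ^ 2)⁻¹ := by
  have hs : 0 < s := (abs_nonneg d).trans_lt h
  have hratio : (d / s) ^ 2 < 1 := by
    rw [div_pow, div_lt_one (by positivity)]
    exact sq_lt_sq.2 (h.trans_le (le_abs_self s))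
  have hlimit : (s ^ 2)⁻¹ * (1 - (d / s) ^ 2)⁻¹ = (s ^ 2 - d ^ 2)⁻¹ := by
    rw [← mul_inv, mul_sub, ← mul_pow, mul_div_cancel₀ _ hs.ne', mul_one]
  rw [← hlimit]
  refine ((hasSum_geometric_of_lt_one (sq_nonneg _) hratio).mul_left (s ^ 2)⁻¹).congr_fun
    fun k => ?_
  rw [← pow_mul, div_pow, pow_add, mul_inv]
  ring

/-- The half-strip `|d| < a < s`. For `a = 1` it is what `hypQuad α` looks like from the vertex
`(1, 1)` of the square, in magnified diagonal coordinates `(s, d)`, in the limit `α → 1`. -/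
def halfStrip (a : ℝ) : Set (ℝ × ℝ) := Ioi a ×ˢ Ioo (-a) a

theorem measurableSet_halfStrip (a : ℝ) : MeasurableSet (halfStrip a) :=
  measurableSet_Ioi.prod measurableSet_Ioo

theorem abs_snd_lt_fst_of_mem_halfStrip {p : ℝ × ℝ} (hp : p ∈ halfStrip a) : |p.2| < p.1 :=
  (abs_lt.2 hp.2).trans hp.1

theorem sq_sub_sq_pos_of_mem_halfStrip {p : ℝ × ℝ} (hp : p ∈ halfStrip a) :
    0 < p.1 ^ 2 - p.2 ^ 2 :=
  sub_pos.2 (sq_lt_sq.2 ((abs_snd_lt_fst_of_mem_halfStrip hp).trans_le (le_abs_self _)))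

theorem volume_restrict_halfStrip (a : ℝ) :
    (volume : Measure (ℝ × ℝ)).restrict (halfStrip a) =
      (volume.restrict (Ioi a)).prod (volume.restrict (Ioo (-a) a)) :=
  (Measure.prod_restrict _ _).symm

theorem integrableOn_halfStrip_inv_pow_mul_pow (ha : 0 < a) (k : ℕ) :
    IntegrableOn (fun p : ℝ × ℝ => (p.1 ^ (2 * k + 2))⁻¹ * p.2 ^ (2 * k)) (halfStrip a) := by
  have hd : IntegrableOn (fun d : ℝ => d ^ (2 * k)) (Ioo (-a) a) :=
    (continuous_pow _).integrableOn_Icc.mono_set Ioo_subset_Icc_self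
  rw [IntegrableOn, volume_restrict_halfStrip]
  exact (integrableOn_Ioi_inv_pow ha (by omega)).mul_prod hd

theorem setIntegral_halfStrip_inv_pow_mul_pow (ha : 0 < a) (k : ℕ) :
    ∫ p in halfStrip a, (p.1 ^ (2 * k + 2))⁻¹ * p.2 ^ (2 * k) = 2 * (1 / (2 * k + 1) ^ 2) := by
  rw [volume_restrict_halfStrip, integral_prod_mul (fun s : ℝ => (s ^ (2 * k + 2))⁻¹)
    fun d : ℝ => d ^ (2 * k), integral_Ioi_inv_pow_add_two ha, integral_Ioo_neg_self_even_pow ha.le]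
  push_cast
  field_simp

theorem setIntegral_halfStrip_inv_sq_sub_sq (ha : 0 < a) :
    ∫ p in halfStrip a, (p.1 ^ 2 - p.2 ^ 2)⁻¹ = π ^ 2 / 4 := by
  let term (k : ℕ) (p : ℝ × ℝ) : ℝ := (p.1 ^ (2 * k + 2))⁻¹ * p.2 ^ (2 * k)
  have hnorm (k : ℕ) (p : ℝ × ℝ) : ‖term k p‖ = term k p :=
    norm_of_nonneg <| mul_nonneg (inv_nonneg.2 <| (even_two_mul (k + 1)).pow_nonneg p.1)
      ((even_two_mul k).pow_nonneg p.2)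
  have hvalue (k : ℕ) : ∫ p in halfStrip a, term k p = 2 * (1 / (2 * k + 1) ^ 2) :=
    setIntegral_halfStrip_inv_pow_mul_pow ha k
  have hsum := hasSum_one_div_odd_sq.mul_left 2
  have hseries := hasSum_integral_of_summable_integral_norm (F := term)
    (integrableOn_halfStrip_inv_pow_mul_pow ha)
    (by simpa only [hnorm, hvalue] using hsum.summable)
  calc ∫ p in halfStrip a, (p.1 ^ 2 - p.2 ^ 2)⁻¹
      = ∫ p in halfStrip a, ∑' k, term k p :=
        setIntegral_congr_fun (measurableSet_halfStrip a) fun p hp =>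
          (hasSum_inv_sq_sub_sq (abs_snd_lt_fst_of_mem_halfStrip hp)).tsum_eq.symm
    _ = 2 * (π ^ 2 / 8) := hseries.unique (by simpa only [hvalue] using hsum)
    _ = π ^ 2 / 4 := by ring

theorem integrableOn_halfStrip_inv_sq_sub_sq (ha : 0 < a) :
    IntegrableOn (fun p : ℝ × ℝ => (p.1 ^ 2 - p.2 ^ 2)⁻¹) (halfStrip a) :=
  .of_integral_ne_zero (by rw [setIntegral_halfStrip_inv_sq_sub_sq ha]; positivity)

end StripIntegral

theorem tendsto_const_sub_nhdsLT (a c : ℝ) : Tendsto (fun x => c - x) (𝓝[<] a) (𝓝[>] (c - a)) :=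
  tendsto_nhdsWithin_iff.2 ⟨((continuous_sub_left c).tendsto a).mono_left nhdsWithin_le_nhds,
    by filter_upwards [self_mem_nhdsWithin] with x hx using sub_lt_sub_left hx c⟩

/-- The diagonal coordinates `(x + y, x - y)` on the plane, in which `hypQuad α` is a rectangle. -/
noncomputable def diagCoords : (ℝ × ℝ) ≃L[ℝ] (ℝ × ℝ) :=
  LinearEquiv.toContinuousLinearEquiv
  { toFun := fun q => (q.1 + q.2, q.1 - q.2)
    invFun := fun p => ((p.1 + p.2) / 2, (p.1 - p.2) / 2)
    map_add' := fun x y => by ext <;> simp <;> ring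
    map_smul' := fun c x => by ext <;> simp <;> ring
    left_inv := fun x => by ext <;> simp
    right_inv := fun x => by ext <;> simp <;> ring }

@[simp]
theorem diagCoords_apply (q : ℝ × ℝ) : diagCoords q = (q.1 + q.2, q.1 - q.2) := rfl

@[simp]
theorem diagCoords_symm_apply (p : ℝ × ℝ) :
    diagCoords.symm p = ((p.1 + p.2) / 2, (p.1 - p.2) / 2) := rfl

theorem det_diagCoords_symm : (diagCoords.symm : ℝ × ℝ →L[ℝ] ℝ × ℝ).det = -1 / 2 := by
  have hentries : LinearMap.toMatrix (.finTwoProd ℝ) (.finTwoProd ℝ)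
      ((diagCoords.symm : ℝ × ℝ →L[ℝ] ℝ × ℝ) : ℝ × ℝ →ₗ[ℝ] ℝ × ℝ) =
        !![1 / 2, 1 / 2; 1 / 2, -1 / 2] := by
    ext i j
    fin_cases i <;> fin_cases j <;> simp [LinearMap.toMatrix_apply]
  rw [ContinuousLinearMap.det, ← LinearMap.det_toMatrix (.finTwoProd ℝ), hentries,
    Matrix.det_fin_two_of]
  norm_num

theorem hypQuad_eq_preimage_diagCoords {α : ℝ} (hα : α ∈ Icc (-1) 1) :
    hypQuad α = diagCoords ⁻¹' (Ioo (-(1 + α)) (1 + α) ×ˢ Ioo (-(1 - α)) (1 - α)) := by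
  have hvertices : ({(1, α), (α, 1), (-1, -α), (-α, -1)} : Set (ℝ × ℝ)) =
      diagCoords.symm.toLinearEquiv.toLinearMap ''
        ({-(1 + α), 1 + α} ×ˢ {-(1 - α), 1 - α}) := by
    have happly (p : ℝ × ℝ) : diagCoords.symm.toLinearEquiv.toLinearMap p =
        ((p.1 + p.2) / 2, (p.1 - p.2) / 2) := rfl
    ext q
    simp only [insert_prod, singleton_prod, image_union, image_pair, happly, mem_union,
      mem_insert_iff, mem_singleton_iff]
    ring_nf
    tauto
  have himage (s : Set (ℝ × ℝ)) :
      diagCoords.symm.toLinearEquiv.toLinearMap '' s = diagCoords ⁻¹' s :=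
    diagCoords.symm.image_eq_preimage_symm s
  rw [hypQuad, hvertices, ← LinearMap.image_convexHull, convexHull_prod, convexHull_pair,
    convexHull_pair, segment_eq_Icc (by linarith [hα.1]), segment_eq_Icc (by linarith [hα.2]),
    himage, ← IsOpenMap.preimage_interior_eq_interior_preimage (f := diagCoords)
      diagCoords.toHomeomorph.isOpenMap diagCoords.continuous,
    interior_prod_eq, interior_Icc, interior_Icc]

theorem neg_hypQuad {α : ℝ} (hα : α ∈ Icc (-1) 1) : -hypQuad α = hypQuad α := by
  ext q
  simp only [hypQuad_eq_preimage_diagCoords hα, Set.mem_neg, mem_preimage, diagCoords_apply,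
    mem_prod, mem_Ioo, Prod.fst_neg, Prod.snd_neg]
  constructor <;> rintro ⟨⟨_, _⟩, _, _⟩ <;> refine ⟨⟨?_, ?_⟩, ?_, ?_⟩ <;> linarith

theorem dualBallArea_even : Function.Even dualBallArea := fun q => by
  simp [dualBallArea]

/-- Coordinates centred at the vertex `(1, 1)` of the square, magnified by `1 / ε` and rotated so
that the first axis points into the square along its diagonal. -/
noncomputable def cornerChart (ε : ℝ) (p : ℝ × ℝ) : ℝ × ℝ := (1, 1) - ε • diagCoords.symm p

section CornerChart

variable {ε : ℝ} {p : ℝ × ℝ}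

theorem cornerChart_apply (ε : ℝ) (p : ℝ × ℝ) :
    cornerChart ε p = (1 - ε * ((p.1 + p.2) / 2), 1 - ε * ((p.1 - p.2) / 2)) := rfl

theorem diagCoords_cornerChart (ε : ℝ) (p : ℝ × ℝ) :
    diagCoords (cornerChart ε p) = (2 - ε * p.1, -(ε * p.2)) := by
  simp only [diagCoords_apply, cornerChart_apply]
  ext <;> ring

theorem continuous_cornerChart (ε : ℝ) : Continuous (cornerChart ε) := by
  unfold cornerChart
  fun_prop

theorem tendsto_cornerChart_nhds_zero (p : ℝ × ℝ) :
    Tendsto (cornerChart · p) (𝓝 0) (𝓝 (1, 1)) := by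
  have hcont : Continuous (cornerChart · p) := by
    unfold cornerChart
    fun_prop
  simpa [cornerChart] using hcont.tendsto 0

theorem cornerChart_bijective (hε : ε ≠ 0) : Function.Bijective (cornerChart ε) :=
  (Equiv.subLeft (1, 1)).bijective.comp ((MulAction.bijective₀ hε).comp diagCoords.symm.bijective)

theorem hasFDerivAt_cornerChart (ε : ℝ) (p : ℝ × ℝ) :
    HasFDerivAt (cornerChart ε) ((-ε) • (diagCoords.symm : ℝ × ℝ →L[ℝ] ℝ × ℝ)) p :=
  ((diagCoords.symm.hasFDerivAt.const_smul ε).const_sub (1, 1)).congr_fderiv (neg_smul _ _).symm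

theorem abs_det_fderiv_cornerChart (ε : ℝ) :
    |((-ε) • (diagCoords.symm : ℝ × ℝ →L[ℝ] ℝ × ℝ)).det| = ε ^ 2 / 2 := by
  have hdet : ((-ε) • (diagCoords.symm : ℝ × ℝ →L[ℝ] ℝ × ℝ)).det = -(ε ^ 2 / 2) := by
    rw [ContinuousLinearMap.det, ContinuousLinearMap.toLinearMap_smul,
      LinearMap.det_smul, ← ContinuousLinearMap.det, det_diagCoords_symm, finrank_prod,
      finrank_self]
    ring
  rw [hdet, abs_neg, abs_of_nonneg (by positivity)]

theorem setIntegral_eq_setIntegral_preimage_cornerChart {F : Type*} [NormedAddCommGroup F]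
    [NormedSpace ℝ F] (hε : ε ≠ 0) (f : ℝ × ℝ → F) {s : Set (ℝ × ℝ)} (hs : MeasurableSet s) :
    ∫ q in s, f q = ∫ p in cornerChart ε ⁻¹' s, (ε ^ 2 / 2) • f (cornerChart ε p) := by
  have hbij := cornerChart_bijective hε
  have h := integral_image_eq_integral_abs_det_fderiv_smul volume
    ((continuous_cornerChart ε).measurable hs)
    (fun p _ => (hasFDerivAt_cornerChart ε p).hasFDerivWithinAt) hbij.injective.injOn f
  rwa [image_preimage_eq s hbij.surjective, abs_det_fderiv_cornerChart] at h

/-- The part of `halfStrip 1` that `cornerChart ε` maps onto the half of `hypQuad (1 - ε)` lying on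
the side of the vertex `(1, 1)`. -/
def cornerRegion (ε : ℝ) : Set (ℝ × ℝ) := Ioo 1 (2 / ε) ×ˢ Ioo (-1) 1

theorem measurableSet_cornerRegion (ε : ℝ) : MeasurableSet (cornerRegion ε) :=
  measurableSet_Ioo.prod measurableSet_Ioo

theorem cornerRegion_subset_halfStrip (ε : ℝ) : cornerRegion ε ⊆ halfStrip 1 :=
  prod_mono_left Ioo_subset_Ioi_self

theorem eventually_mem_cornerRegion (hp : p ∈ halfStrip 1) :
    ∀ᶠ ε : ℝ in 𝓝[>] 0, p ∈ cornerRegion ε := by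
  have hfst : ∀ᶠ ε : ℝ in 𝓝[>] 0, p.1 < 2 / ε :=
    (tendsto_inv_nhdsGT_zero.const_mul_atTop two_pos).eventually_gt_atTop p.1
  filter_upwards [hfst] with ε hε using ⟨⟨hp.1, hε⟩, hp.2⟩

theorem preimage_cornerChart_hypQuad_inter (hε : ε ∈ Ioc 0 2) :
    cornerChart ε ⁻¹' (hypQuad (1 - ε) ∩ {q | 0 < q.1 + q.2}) = cornerRegion ε := by
  have hα : 1 - ε ∈ Icc (-1) 1 := ⟨by linarith [hε.2], by linarith [hε.1]⟩
  ext p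
  have hsum : (cornerChart ε p).1 + (cornerChart ε p).2 = 2 - ε * p.1 :=
    congrArg Prod.fst (diagCoords_cornerChart ε p)
  have hfst : 1 < p.1 ↔ ε < ε * p.1 := (lt_mul_iff_one_lt_right hε.1).symm
  have hsnd : p.2 < 1 ↔ ε * p.2 < ε := (mul_lt_iff_lt_one_right hε.1).symm
  have hsnd' : -1 < p.2 ↔ -ε < ε * p.2 := by
    rw [← mul_neg_one ε, mul_lt_mul_iff_right₀ hε.1]
  simp only [hypQuad_eq_preimage_diagCoords hα, cornerRegion, mem_preimage, mem_inter_iff,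
    mem_prod, diagCoords_cornerChart, mem_Ioo, mem_ofPred_eq, hsum, lt_div_iff₀' hε.1, hfst, hsnd,
    hsnd']
  grind

theorem cornerChart_mem_of_mem_cornerRegion (hε : ε ∈ Ioc 0 1) (hp : p ∈ cornerRegion ε) :
    cornerChart ε p ∈ Icc (-1 / 2) 1 ×ˢ Icc (-1 / 2) 1 := by
  obtain ⟨hε0, hε1⟩ := hε
  obtain ⟨⟨hs, hs'⟩, hd, hd'⟩ := hp
  rw [lt_div_iff₀' hε0] at hs'
  have hsum_nonneg : 0 ≤ ε * (p.1 + p.2) := mul_nonneg hε0.le (by linarith)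
  have hdiff_nonneg : 0 ≤ ε * (p.1 - p.2) := mul_nonneg hε0.le (by linarith)
  have hupper : ε * p.2 ≤ 1 := by nlinarith
  have hlower : -1 ≤ ε * p.2 := by nlinarith
  rw [cornerChart_apply]
  refine ⟨⟨?_, ?_⟩, ?_, ?_⟩ <;> dsimp only <;> linarith

theorem tendsto_setIntegral_cornerChart {w : ℝ × ℝ → ℝ}
    (hw : ContinuousOn w (Icc (-1 / 2) 1 ×ˢ Icc (-1 / 2) 1)) :
    Tendsto (fun ε => ∫ p in cornerRegion ε, w (cornerChart ε p) * (p.1 ^ 2 - p.2 ^ 2)⁻¹)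
      (𝓝[>] 0) (𝓝 (w (1, 1) * (π ^ 2 / 4))) := by
  obtain ⟨C, hC⟩ := (isCompact_Icc.prod isCompact_Icc).exists_bound_of_continuousOn hw
  have hmem : ∀ᶠ ε : ℝ in 𝓝[>] 0,
      MapsTo (cornerChart ε) (cornerRegion ε) (Icc (-1 / 2) 1 ×ˢ Icc (-1 / 2) 1) := by
    filter_upwards [Ioc_mem_nhdsGT zero_lt_one] with ε hε p hp
    exact cornerChart_mem_of_mem_cornerRegion hε hp
  rw [← setIntegral_halfStrip_inv_sq_sub_sq zero_lt_one, ← integral_const_mul]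
  refine tendsto_setIntegral_filter_of_dominated_convergence
    (bound := fun p => C * (p.1 ^ 2 - p.2 ^ 2)⁻¹) measurableSet_cornerRegion
    (measurableSet_halfStrip 1) cornerRegion_subset_halfStrip
    (fun p hp => eventually_mem_cornerRegion hp) ?_ ?_
    ((integrableOn_halfStrip_inv_sq_sub_sq zero_lt_one).const_mul C) fun p hp => ?_
  · filter_upwards [hmem] with ε hε
    have hcomp : ContinuousOn (fun p => w (cornerChart ε p)) (cornerRegion ε) :=
      hw.comp (continuous_cornerChart ε).continuousOn hε
    exact (hcomp.aestronglyMeasurable (measurableSet_cornerRegion ε)).mul (by fun_prop)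
  · filter_upwards [hmem] with ε hε p hp
    have hkernel := sq_sub_sq_pos_of_mem_halfStrip (cornerRegion_subset_halfStrip ε hp)
    rw [norm_mul, norm_of_nonneg (inv_nonneg.2 hkernel.le)]
    gcongr
    exact hC _ (hε hp)
  · have hchart : Tendsto (cornerChart · p) (𝓝[>] 0)
        (𝓝[Icc (-1 / 2) 1 ×ˢ Icc (-1 / 2) 1] (1, 1)) := by
      refine tendsto_nhdsWithin_iff.2
        ⟨(tendsto_cornerChart_nhds_zero p).mono_left nhdsWithin_le_nhds, ?_⟩
      filter_upwards [hmem, eventually_mem_cornerRegion hp] with ε hε hpε using hε hpε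
    exact ((hw (1, 1) (by norm_num)).tendsto.comp hchart).mul_const _

end CornerChart

/-- The factor of `dualBallArea` that stays regular at the vertex `(1, 1)`, the singular one
being `1 / (2 (1 - x) (1 - y))`. -/
noncomputable def cornerWeight (q : ℝ × ℝ) : ℝ :=
  (2 + max |q.1| |q.2|) / ((1 + q.1) * (1 + q.2))

theorem continuousOn_cornerWeight :
    ContinuousOn cornerWeight (Icc (-1 / 2) 1 ×ˢ Icc (-1 / 2) 1) := by
  refine ContinuousOn.div (by fun_prop) (by fun_prop) ?_
  rintro ⟨x, y⟩ ⟨⟨hx, _⟩, hy, _⟩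
  exact mul_ne_zero (by dsimp only at hx; linarith) (by dsimp only at hy; linarith)

theorem dualBallArea_cornerChart {ε : ℝ} (hε : ε ≠ 0) (p : ℝ × ℝ) :
    ε ^ 2 / 2 * dualBallArea (cornerChart ε p) =
      cornerWeight (cornerChart ε p) * (p.1 ^ 2 - p.2 ^ 2)⁻¹ := by
  set q := cornerChart ε p with hq
  have hsingular : (1 - q.1) * (1 - q.2) = ε ^ 2 / 4 * (p.1 ^ 2 - p.2 ^ 2) := by
    rw [hq, cornerChart_apply]
    ring
  have hdenom : 2 * (1 - q.1 ^ 2) * (1 - q.2 ^ 2) =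
      ε ^ 2 / 2 * ((1 + q.1) * (1 + q.2) * (p.1 ^ 2 - p.2 ^ 2)) := by
    linear_combination 2 * (1 + q.1) * (1 + q.2) * hsingular
  rw [dualBallArea, cornerWeight, hdenom, ← mul_div_assoc, mul_div_mul_left _ _ (by positivity),
    ← div_eq_mul_inv, div_div]

theorem setIntegral_hypQuad_dualBallArea {ε : ℝ} (hε : ε ∈ Ioc 0 2) :
    ∫ q in hypQuad (1 - ε), dualBallArea q =
      2 * ∫ p in cornerRegion ε, cornerWeight (cornerChart ε p) * (p.1 ^ 2 - p.2 ^ 2)⁻¹ := by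
  let φ : ℝ × ℝ →ₗ[ℝ] ℝ := LinearMap.fst ℝ ℝ ℝ + LinearMap.snd ℝ ℝ ℝ
  have hφ : φ ≠ 0 := fun h => by simpa [φ] using LinearMap.congr_fun h (1, 0)
  have hα : 1 - ε ∈ Icc (-1) 1 := ⟨by linarith [hε.2], by linarith [hε.1]⟩
  have hhalf : MeasurableSet (hypQuad (1 - ε) ∩ {q | 0 < q.1 + q.2}) :=
    (isOpen_interior.inter (isOpen_lt (by fun_prop) (by fun_prop))).measurableSet
  calc ∫ q in hypQuad (1 - ε), dualBallArea q
      = 2 • ∫ q in hypQuad (1 - ε) ∩ {q | 0 < q.1 + q.2}, dualBallArea q :=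
        setIntegral_eq_two_smul_inter_pos_of_even dualBallArea_even (neg_hypQuad hα) hφ
    _ = _ := by
        rw [setIntegral_eq_setIntegral_preimage_cornerChart hε.1.ne' _ hhalf,
          preimage_cornerChart_hypQuad_inter hε]
        simp only [smul_eq_mul, dualBallArea_cornerChart hε.1.ne', nsmul_eq_mul, Nat.cast_ofNat]

theorem stmt9 :
    Filter.Tendsto (fun α : ℝ => ∫ q in hypQuad α, dualBallArea q)
      (nhdsWithin 1 (Set.Ico (0 : ℝ) 1)) (nhds (3 * π ^ 2 / 8)) := by
  rw [nhdsWithin_Ico_eq_nhdsLT zero_lt_one]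
  have hε : Tendsto (fun α : ℝ => 1 - α) (𝓝[<] 1) (𝓝[>] 0) := by
    simpa only [sub_self] using tendsto_const_sub_nhdsLT 1 1
  have hcorner := (tendsto_setIntegral_cornerChart continuousOn_cornerWeight).const_mul 2
  have hvalue : 2 * (cornerWeight (1, 1) * (π ^ 2 / 4)) = 3 * π ^ 2 / 8 := by
    norm_num [cornerWeight]
    ring
  rw [← hvalue]
  refine (hcorner.comp hε).congr' ?_
  filter_upwards [hε.eventually (Ioc_mem_nhdsGT two_pos)] with α hα
  rw [Function.comp_apply, ← setIntegral_hypQuad_dualBallArea hα, sub_sub_cancel]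
end

section
/- For α ∈ (0,1) let T_α = {(x,y) ∈ ℝ² : |x| < y < α} be the open triangle cut out by the lines y = x, y = −x and y = α. Then (∫_{T_α} A(x,y) d(x,y)) / (log(1−α))² tends to 3/8 as α tends to 1 from the left. Likewise, for β ∈ (0,1), with T'_β = {(x,y) ∈ ℝ² : |y| < x < β}, the ratio (∫_{T'_β} A(x,y) d(x,y)) / (log(1−β))² tends to 3/8 as β tends to 1 from the left. -/
open MeasureTheory Real

/-!
Reflection in the diagonal preserves `dualBallArea` and exchanges the two triangles, so only
`|y| < x < β` matters. Its slice over `x` contributes `(2 + x) / (1 - x²) * artanh x`, which is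
asymptotic to `-(3/4) * log (1 - x) / (1 - x)`, the derivative of `(3/8) * log (1 - x) ^ 2`, as
`x → 1⁻`. Since the latter tends to infinity, the asymptotic equivalence survives integration
(L'Hôpital's rule in the `∞/∞` case).
-/

open Set Filter Asymptotics Topology

section LHopital

variable {a b : ℝ} {g g' : ℝ → ℝ}

theorem isLittleO_of_hasDerivAt_of_tendsto_atTop {E : Type*} [NormedAddCommGroup E]
    [NormedSpace ℝ E] {f f' : ℝ → E}
    (hf : ∀ᶠ x in 𝓝[<] b, HasDerivAt f (f' x) x) (hg : ∀ᶠ x in 𝓝[<] b, HasDerivAt g (g' x) x)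
    (hg' : ∀ᶠ x in 𝓝[<] b, 0 ≤ g' x) (hg_top : Tendsto g (𝓝[<] b) atTop)
    (h : f' =o[𝓝[<] b] g') : f =o[𝓝[<] b] g := by
  refine isLittleO_iff.2 fun ε hε ↦ ?_
  have hbound : ∀ᶠ x in 𝓝[<] b, ‖f' x‖ ≤ ε / 2 * g' x := by
    filter_upwards [h.def (half_pos hε), hg'] with x hx hx'
    rwa [norm_of_nonneg hx'] at hx
  obtain ⟨c, hcb, hc⟩ := mem_nhdsLT_iff_exists_Ico_subset.1 (hf.and (hg.and hbound))
  have fence : ∀ x ∈ Ico c b, ‖f x‖ ≤ ‖f c‖ + ε / 2 * (g x - g c) := by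
    intro x hx
    have hsub : ∀ y ∈ Icc c x, y ∈ Ico c b := fun y hy ↦ ⟨hy.1, hy.2.trans_lt hx.2⟩
    have hB : ∀ y ∈ Icc c x,
        HasDerivAt (fun y ↦ ‖f c‖ + ε / 2 * (g y - g c)) (ε / 2 * g' y) y := fun y hy ↦
      (((hc (hsub y hy)).2.1.sub_const _).const_mul _).const_add _
    exact image_norm_le_of_norm_deriv_right_le_deriv_boundary'
      (fun y hy ↦ (hc (hsub y hy)).1.continuousAt.continuousWithinAt)
      (fun y hy ↦ (hc (hsub y (Ico_subset_Icc_self hy))).1.hasDerivWithinAt) (by simp)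
      (fun y hy ↦ (hB y hy).continuousAt.continuousWithinAt)
      (fun y hy ↦ (hB y (Ico_subset_Icc_self hy)).hasDerivWithinAt)
      (fun y hy ↦ (hc (hsub y (Ico_subset_Icc_self hy))).2.2) (right_mem_Icc.2 hx.1)
  filter_upwards [Ico_mem_nhdsLT hcb, hg_top.eventually_ge_atTop 0,
    (hg_top.const_mul_atTop (half_pos hε)).eventually_ge_atTop (‖f c‖ - ε / 2 * g c)]
    with x hx hgx hlarge
  rw [norm_of_nonneg hgx]
  linarith [fence x hx]

theorem isEquivalent_of_hasDerivAt_of_tendsto_atTop {f f' : ℝ → ℝ}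
    (hf : ∀ᶠ x in 𝓝[<] b, HasDerivAt f (f' x) x) (hg : ∀ᶠ x in 𝓝[<] b, HasDerivAt g (g' x) x)
    (hg' : ∀ᶠ x in 𝓝[<] b, 0 ≤ g' x) (hg_top : Tendsto g (𝓝[<] b) atTop)
    (h : f' ~[𝓝[<] b] g') : f ~[𝓝[<] b] g := by
  have hsub : ∀ᶠ x in 𝓝[<] b, HasDerivAt (f - g) ((f' - g') x) x := by
    filter_upwards [hf, hg] with x hfx hgx using hfx.sub hgx
  exact isLittleO_of_hasDerivAt_of_tendsto_atTop hsub hg hg' hg_top h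

theorem isEquivalent_integral_of_tendsto_atTop {f : ℝ → ℝ} (hab : a < b)
    (hf : ContinuousOn f (Ico a b)) (hg : ∀ᶠ x in 𝓝[<] b, HasDerivAt g (g' x) x)
    (hg' : ∀ᶠ x in 𝓝[<] b, 0 ≤ g' x) (hg_top : Tendsto g (𝓝[<] b) atTop)
    (h : f ~[𝓝[<] b] g') : (fun x ↦ ∫ t in a..x, f t) ~[𝓝[<] b] g := by
  refine isEquivalent_of_hasDerivAt_of_tendsto_atTop ?_ hg hg' hg_top h
  filter_upwards [Ioo_mem_nhdsLT hab] with x hx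
  have hint : IntervalIntegrable f volume a x :=
    (hf.mono (Icc_subset_Ico_right hx.2)).intervalIntegrable_of_Icc hx.1.le
  have hf' : ContinuousOn f (Ioo a b) := hf.mono Ioo_subset_Ico_self
  exact intervalIntegral.integral_hasDerivAt_right hint
    (hf'.stronglyMeasurableAtFilter isOpen_Ioo x hx) (hf'.continuousAt (Ioo_mem_nhds hx.1 hx.2))

end LHopital

theorem setIntegral_regionBetween {α E : Type*} [MeasurableSpace α] [NormedAddCommGroup E]
    [NormedSpace ℝ E] {μ : Measure α} [SFinite μ] {ν : Measure ℝ} [SFinite ν] {f g : α → ℝ}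
    {s : Set α} {F : α × ℝ → E} (hf : Measurable f) (hg : Measurable g) (hs : MeasurableSet s)
    (hF : IntegrableOn F (regionBetween f g s) (μ.prod ν)) :
    ∫ p in regionBetween f g s, F p ∂μ.prod ν =
      ∫ x in s, ∫ y in Ioo (f x) (g x), F (x, y) ∂ν ∂μ := by
  have hR : MeasurableSet (regionBetween f g s) := measurableSet_regionBetween hf hg hs
  rw [← integral_indicator hR, integral_prod _ (hF.integrable_indicator hR),
    ← integral_indicator hs]
  congr 1 with x
  by_cases hx : x ∈ s
  · rw [indicator_of_mem hx, ← integral_indicator measurableSet_Ioo]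
    simp only [indicator, regionBetween, mem_ofPred_eq, hx, true_and]
  · simp [indicator, regionBetween, hx]

section Artanh

theorem artanh_eq_half_log_sub_log {x : ℝ} (hx : x ∈ Ioo (-1) 1) :
    artanh x = (log (1 + x) - log (1 - x)) / 2 := by
  rw [artanh_eq_half_log (Ioo_subset_Icc_self hx),
    log_div (by linarith [hx.1]) (by linarith [hx.2])]
  ring

theorem artanh_neg_eq_neg_artanh {x : ℝ} (hx : x ∈ Ioo (-1) 1) : artanh (-x) = -artanh x := by
  have hx' : -x ∈ Ioo (-1) 1 := ⟨neg_lt_neg hx.2, neg_lt.1 hx.1⟩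
  rw [artanh_eq_half_log_sub_log hx, artanh_eq_half_log_sub_log hx', sub_neg_eq_add,
    ← sub_eq_add_neg]
  ring

theorem one_sub_sq_pos {x : ℝ} (hx : x ∈ Ioo (-1) 1) : 0 < 1 - x ^ 2 :=
  sub_pos.2 ((sq_lt_one_iff_abs_lt_one x).2 (abs_lt.2 hx))

theorem hasDerivAt_artanh {x : ℝ} (hx : x ∈ Ioo (-1) 1) :
    HasDerivAt artanh (1 - x ^ 2)⁻¹ x := by
  have hadd : 1 + x ≠ 0 := by linarith [hx.1]
  have hsub : 1 - x ≠ 0 := by linarith [hx.2]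
  have hsq : 1 - x ^ 2 ≠ 0 := (one_sub_sq_pos hx).ne'
  have hlog : HasDerivAt (fun x ↦ (log (1 + x) - log (1 - x)) / 2)
      ((1 / (1 + x) - -1 / (1 - x)) / 2) x :=
    ((((hasDerivAt_id x).const_add 1).log hadd).sub
      (((hasDerivAt_id x).const_sub 1).log hsub)).div_const 2
  refine (hlog.congr_of_eventuallyEq ?_).congr_deriv (by field_simp; ring)
  filter_upwards [Ioo_mem_nhds hx.1 hx.2] with y hy using artanh_eq_half_log_sub_log hy

theorem continuousOn_artanh : ContinuousOn artanh (Ioo (-1) 1) := fun _ hx ↦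
  (hasDerivAt_artanh hx).continuousAt.continuousWithinAt

theorem integral_inv_one_sub_sq {a b : ℝ} (ha : a ∈ Ioo (-1) 1) (hb : b ∈ Ioo (-1) 1) :
    ∫ x in a..b, (1 - x ^ 2)⁻¹ = artanh b - artanh a := by
  have hsub : uIcc a b ⊆ Ioo (-1) 1 := ordConnected_Ioo.uIcc_subset ha hb
  refine intervalIntegral.integral_eq_sub_of_hasDerivAt
    (fun x hx ↦ hasDerivAt_artanh (hsub hx)) (ContinuousOn.intervalIntegrable ?_)
  exact ContinuousOn.inv₀ (by fun_prop) fun x hx ↦ (one_sub_sq_pos (hsub hx)).ne'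

theorem tendsto_log_one_sub_atBot : Tendsto (fun x : ℝ ↦ log (1 - x)) (𝓝[<] 1) atBot := by
  refine tendsto_log_nhdsGT_zero.comp (tendsto_nhdsWithin_iff.2 ⟨?_, ?_⟩)
  · exact ((continuous_sub_left (1 : ℝ)).tendsto' 1 0 (sub_self 1)).mono_left nhdsWithin_le_nhds
  · filter_upwards [self_mem_nhdsWithin] with x (hx : x < 1) using sub_pos.2 hx

theorem artanh_isEquivalent_log_one_sub :
    artanh ~[𝓝[<] 1] fun x ↦ -(1 / 2) * log (1 - x) := by
  have hlog : Tendsto (fun x : ℝ ↦ log (1 + x) / 2) (𝓝[<] 1) (𝓝 (log (1 + 1) / 2)) :=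
    (ContinuousAt.tendsto (f := fun x : ℝ ↦ log (1 + x) / 2)
      (by fun_prop (disch := norm_num))).mono_left nhdsWithin_le_nhds
  have htop : Tendsto (fun x : ℝ ↦ -(1 / 2) * log (1 - x)) (𝓝[<] 1) atTop :=
    tendsto_log_one_sub_atBot.const_mul_atBot_of_neg (by norm_num)
  have hbdd : (fun x : ℝ ↦ log (1 + x) / 2) =o[𝓝[<] 1] fun x ↦ -(1 / 2) * log (1 - x) :=
    (hlog.isBigO_one ℝ).trans_isLittleO
      ((isLittleO_one_left_iff ℝ).2 (tendsto_norm_atTop_atTop.comp htop))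
  refine hbdd.congr' ?_ .rfl
  filter_upwards [Ioo_mem_nhdsLT (by norm_num : (-1 : ℝ) < 1)] with x hx
  rw [Pi.sub_apply, artanh_eq_half_log_sub_log hx]
  ring

end Artanh

theorem dualBallArea_swap (q : ℝ × ℝ) : dualBallArea q.swap = dualBallArea q := by
  simp only [dualBallArea, Prod.fst_swap, Prod.snd_swap, max_comm, mul_right_comm]

theorem setIntegral_dualBallArea_preimage_swap (s : Set (ℝ × ℝ)) :
    ∫ q in Prod.swap ⁻¹' s, dualBallArea q = ∫ q in s, dualBallArea q := by
  have hswap : MeasurePreserving (Prod.swap : ℝ × ℝ → ℝ × ℝ) := Measure.measurePreserving_swap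
  simpa only [dualBallArea_swap] using
    hswap.setIntegral_preimage_emb MeasurableEquiv.prodComm.measurableEmbedding dualBallArea s

theorem continuousOn_dualBallArea : ContinuousOn dualBallArea (Ioo (-1) 1 ×ˢ Ioo (-1) 1) := by
  refine ContinuousOn.div (by fun_prop) (by fun_prop) fun q hq ↦ ?_
  have := (one_sub_sq_pos hq.1).ne'
  have := (one_sub_sq_pos hq.2).ne'
  positivity

theorem dualBallArea_of_abs_le {x y : ℝ} (h : |y| ≤ x) :
    dualBallArea (x, y) = (2 + x) / (2 * (1 - x ^ 2)) * (1 - y ^ 2)⁻¹ := by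
  rw [dualBallArea, abs_of_nonneg ((abs_nonneg y).trans h), max_eq_left h, div_mul_eq_div_div,
    div_eq_mul_inv _ (1 - y ^ 2)]

/-- The integral of `dualBallArea` over the slice `|y| < x` of the square at abscissa `x`, in the
closed form valid for `0 < x < 1`. -/
noncomputable def dualBallSlice (x : ℝ) : ℝ :=
  (2 + x) / (1 - x ^ 2) * artanh x

theorem setIntegral_dualBallArea_slice {x : ℝ} (hx : x ∈ Ioo 0 1) :
    ∫ y in Ioo (-x) x, dualBallArea (x, y) = dualBallSlice x := by
  have hx' : x ∈ Ioo (-1) 1 := ⟨by linarith [hx.1], hx.2⟩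
  calc
    ∫ y in Ioo (-x) x, dualBallArea (x, y)
      = ∫ y in Ioo (-x) x, (2 + x) / (2 * (1 - x ^ 2)) * (1 - y ^ 2)⁻¹ :=
        setIntegral_congr_fun measurableSet_Ioo fun y hy ↦
          dualBallArea_of_abs_le (abs_lt.2 hy).le
    _ = (2 + x) / (2 * (1 - x ^ 2)) * ∫ y in (-x)..x, (1 - y ^ 2)⁻¹ := by
        rw [integral_const_mul, intervalIntegral.integral_of_le (by linarith [hx.1]),
          integral_Ioc_eq_integral_Ioo]
    _ = dualBallSlice x := by
        have := (one_sub_sq_pos hx').ne'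
        rw [dualBallSlice, integral_inv_one_sub_sq ⟨neg_lt_neg hx.2, by linarith [hx.1]⟩ hx',
          artanh_neg_eq_neg_artanh hx']
        field_simp
        ring

theorem setOf_abs_lt_and_lt_eq_regionBetween (β : ℝ) :
    {q : ℝ × ℝ | |q.2| < q.1 ∧ q.1 < β} = regionBetween (fun x ↦ -x) id (Ioo 0 β) := by
  ext ⟨x, y⟩
  constructor
  · rintro ⟨h, hβ⟩
    exact ⟨⟨(abs_nonneg y).trans_lt h, hβ⟩, abs_lt.1 h⟩
  · rintro ⟨hx, hy⟩
    exact ⟨abs_lt.2 hy, hx.2⟩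

theorem integrableOn_dualBallArea_regionBetween {β : ℝ} (hβ : β < 1) :
    IntegrableOn dualBallArea (regionBetween (fun x ↦ -x) id (Ioo 0 β)) := by
  have hsq : Icc (-β) β ⊆ Ioo (-1) 1 := Icc_subset_Ioo (neg_lt_neg hβ) hβ
  refine ((continuousOn_dualBallArea.mono (prod_mono hsq hsq)).integrableOn_compact
    (isCompact_Icc.prod isCompact_Icc)).mono_set ?_
  rintro ⟨x, y⟩ ⟨⟨hx₀ : 0 < x, hxβ : x < β⟩, hy₁ : -x < y, hy₂ : y < x⟩
  exact ⟨⟨by linarith, hxβ.le⟩, by linarith, by linarith⟩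

theorem setIntegral_dualBallArea_triangle {β : ℝ} (hβ : β ∈ Ioo 0 1) :
    ∫ q in {q : ℝ × ℝ | |q.2| < q.1 ∧ q.1 < β}, dualBallArea q =
      ∫ x in (0 : ℝ)..β, dualBallSlice x := by
  rw [setOf_abs_lt_and_lt_eq_regionBetween, Measure.volume_eq_prod,
    setIntegral_regionBetween measurable_neg measurable_id measurableSet_Ioo
      (integrableOn_dualBallArea_regionBetween hβ.2),
    intervalIntegral.integral_of_le hβ.1.le, integral_Ioc_eq_integral_Ioo]
  exact setIntegral_congr_fun measurableSet_Ioo fun x hx ↦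
    setIntegral_dualBallArea_slice ⟨hx.1, hx.2.trans hβ.2⟩

theorem continuousOn_dualBallSlice : ContinuousOn dualBallSlice (Ioo (-1) 1) :=
  .mul (.div (by fun_prop) (by fun_prop) fun _ hx ↦ (one_sub_sq_pos hx).ne') continuousOn_artanh

theorem dualBallSlice_isEquivalent :
    dualBallSlice ~[𝓝[<] 1] fun x ↦ -(3 / 4) * log (1 - x) / (1 - x) := by
  have hfrac : (fun x : ℝ ↦ (2 + x) / (1 + x)) ~[𝓝[<] 1] fun _ ↦ 3 / 2 := by
    refine (isEquivalent_const_iff_tendsto (by norm_num)).2 ?_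
    have hcont : ContinuousAt (fun x : ℝ ↦ (2 + x) / (1 + x)) 1 := by
      fun_prop (disch := norm_num)
    exact (hcont.tendsto.mono_left nhdsWithin_le_nhds).trans_eq (by norm_num)
  refine ((hfrac.mul artanh_isEquivalent_log_one_sub).div
    (IsEquivalent.refl (u := fun x : ℝ ↦ 1 - x))).congr_left ?_ |>.congr_right ?_
  · filter_upwards with x
    simp only [Pi.mul_apply, Pi.div_apply, dualBallSlice]
    rw [show 1 - x ^ 2 = (1 + x) * (1 - x) by ring]
    field_simp
  · filter_upwards with x
    simp only [Pi.mul_apply, Pi.div_apply]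
    ring

theorem integral_dualBallSlice_isEquivalent :
    (fun β ↦ ∫ x in (0 : ℝ)..β, dualBallSlice x) ~[𝓝[<] 1]
      fun β ↦ 3 / 8 * log (1 - β) ^ 2 := by
  have hcont : ContinuousOn dualBallSlice (Ico 0 1) :=
    continuousOn_dualBallSlice.mono (Ico_subset_Ioo_left neg_one_lt_zero)
  refine isEquivalent_integral_of_tendsto_atTop zero_lt_one hcont ?_ ?_ ?_
    dualBallSlice_isEquivalent
  · filter_upwards [self_mem_nhdsWithin] with x (hx : x < 1)
    have hx' : 1 - x ≠ 0 := (sub_pos.2 hx).ne'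
    refine (((((hasDerivAt_id x).const_sub 1).log hx').pow 2).const_mul (3 / 8)).congr_deriv ?_
    simp only [id]
    ring
  · filter_upwards [Ioo_mem_nhdsLT zero_lt_one] with x hx
    have hlog : log (1 - x) ≤ 0 := log_nonpos (by linarith [hx.2]) (by linarith [hx.1])
    exact div_nonneg (by linarith) (by linarith [hx.2])
  · have hsq : Tendsto (fun x : ℝ ↦ log (1 - x) ^ 2) (𝓝[<] 1) atTop := by
      simpa only [sq] using tendsto_log_one_sub_atBot.atBot_mul_atBot₀ tendsto_log_one_sub_atBot
    exact hsq.const_mul_atTop (by norm_num)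

theorem tendsto_setIntegral_dualBallArea_div_log_sq :
    Tendsto (fun β : ℝ ↦
        (∫ q in {q : ℝ × ℝ | |q.2| < q.1 ∧ q.1 < β}, dualBallArea q) / log (1 - β) ^ 2)
      (𝓝[<] 1) (𝓝 (3 / 8)) := by
  refine (isEquivalent_const_iff_tendsto (by norm_num)).1 ?_
  refine (integral_dualBallSlice_isEquivalent.div
    (IsEquivalent.refl (u := fun β : ℝ ↦ log (1 - β) ^ 2))).congr_left ?_ |>.congr_right ?_
  · filter_upwards [Ioo_mem_nhdsLT zero_lt_one] with β hβ
    rw [Pi.div_apply, setIntegral_dualBallArea_triangle hβ]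
  · filter_upwards [tendsto_log_one_sub_atBot.eventually_ne_atBot 0] with β hβ
    exact mul_div_cancel_right₀ _ (pow_ne_zero 2 hβ)

theorem stmt12 :
    Filter.Tendsto
      (fun α : ℝ =>
        (∫ q in {q : ℝ × ℝ | |q.1| < q.2 ∧ q.2 < α}, dualBallArea q) /
          (Real.log (1 - α)) ^ 2)
      (nhdsWithin 1 (Set.Ioo (0 : ℝ) 1)) (nhds (3 / 8)) ∧
    Filter.Tendsto
      (fun β : ℝ =>
        (∫ q in {q : ℝ × ℝ | |q.2| < q.1 ∧ q.1 < β}, dualBallArea q) /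
          (Real.log (1 - β)) ^ 2)
      (nhdsWithin 1 (Set.Ioo (0 : ℝ) 1)) (nhds (3 / 8)) := by
  rw [nhdsWithin_Ioo_eq_nhdsLT zero_lt_one]
  refine ⟨?_, tendsto_setIntegral_dualBallArea_div_log_sq⟩
  refine tendsto_setIntegral_dualBallArea_div_log_sq.congr fun α ↦ ?_
  rw [← setIntegral_dualBallArea_preimage_swap]
  rfl
end
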